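/- Let F be a field, V a finite-dimensional F-vector space, and T an endomorphism of V such that V is the sum (supremum) of the eigenspaces of T. If H ⊊ V is a proper T-invariant subspace, then there exist an eigenvalue a₀ of T and a nonzero linear functional χ : V → F such that χ vanishes on H, χ vanishes on eigenspace(T, a) for every eigenvalue a ≠ a₀, and χ does not vanish identically on eigenspace(T, a₀). -/

import Mathlib

/-- Let `F` be a field, `V` a finite-dimensional `F`-vector space, and
`T` an endomorphism of `V` such that `V` is the supremum of the eigenspaces of `T`.
If `H ⊊ V` is a proper `T`-invariant subspace, then there exist an eigenvalue `a₀` of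
`T` and a nonzero linear functional `χ : V → F` vanishing on `H`, vanishing on
`eigenspace T a` for every eigenvalue `a ≠ a₀`, and not vanishing identically on
`eigenspace T a₀`. -/
theorem exists_functional_vanishing_on_proper_invariant_subspace
    (F V : Type*) [Field F] [AddCommGroup V] [Module F V] [FiniteDimensional F V]
    (T : Module.End F V) (hdiag : (⨆ a : F, T.eigenspace a) = ⊤)
    (H : Submodule F V) (hH : ∀ x ∈ H, T x ∈ H) (hHproper : H ≠ ⊤) :
    ∃ a₀ : F, T.HasEigenvalue a₀ ∧
      ∃ χ : V →ₗ[F] F, χ ≠ 0 ∧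
        (∀ x ∈ H, χ x = 0) ∧
        (∀ a : F, T.HasEigenvalue a → a ≠ a₀ → ∀ x ∈ T.eigenspace a, χ x = 0) ∧
        (∃ x ∈ T.eigenspace a₀, χ x ≠ 0) := by
  obtain ⟨a₀, ha₀⟩ : ∃ a, ¬ T.eigenspace a ≤ H := by
    by_contra hcon
    push Not at hcon
    exact hHproper (top_le_iff.mp (hdiag ▸ iSup_le hcon))
  obtain ⟨v, hv, hvH⟩ := SetLike.not_le_iff_exists.mp ha₀
  let S : Module.End F (V ⧸ H) := H.mapQ H T hH
  have hmap : ∀ a, ∀ x ∈ T.eigenspace a, H.mkQ x ∈ S.eigenspace a := by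
    intro a x hx
    rw [Module.End.mem_eigenspace_iff] at hx ⊢
    simp only [S, Submodule.mkQ_apply, Submodule.mapQ_apply, hx, Submodule.Quotient.mk_smul]
  have hv0 : H.mkQ v ≠ 0 := by
    simpa using hvH
  have hnot : H.mkQ v ∉ ⨆ a, ⨆ (_ : a ≠ a₀), S.eigenspace a := fun h =>
    hv0 (Submodule.disjoint_def.mp (S.eigenspaces_iSupIndep a₀) _ (hmap a₀ v hv) h)
  obtain ⟨f, hf, hle⟩ := Submodule.exists_le_ker_of_notMem hnot
  refine ⟨a₀, ?_, f ∘ₗ H.mkQ, ?_, ?_, ?_, v, hv, hf⟩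
  · refine Module.End.hasEigenvalue_of_hasEigenvector (x := v) ⟨hv, ?_⟩
    rintro rfl
    exact hvH H.zero_mem
  · intro h
    exact hf (LinearMap.congr_fun h v)
  · intro x hx
    have : H.mkQ x = 0 := by simpa using hx
    simp only [LinearMap.comp_apply, this, map_zero]
  · intro a _ hne x hx
    exact hle (Submodule.mem_iSup_of_mem a (Submodule.mem_iSup_of_mem hne (hmap a x hx)))
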